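/- arXiv:1708.09800 — 4 statements merged into one kernel-verified Lean document; each statement's English description precedes it below -/
import Mathlib

section
/- Let L be a totally ordered normal incline, let n ≥ 4, and let A be an n×n completely positive matrix over L. Then A has a ⌊n²/4⌋-term support-3 rank-1 CP-representation: there exist k ≤ ⌊n²/4⌋ and an n×k matrix B over L such that A = B * Bᵀ and every column of B has at most 3 nonzero entries. -/
open Matrix

namespace Incl

variable {L : Type*} [CommSemiring L] [LinearOrder L] {ι : Type*} [DecidableEq ι]

/-- A vector supported on (at most) three coordinates. -/
def vec (u v k : ι) (a b c : L) : ι → L :=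
  fun i => if i = u then a else if i = v then b else if i = k then c else 0

/-- A support-3 vector whose rank-one matrix lies below `Z`. -/
def Good (Z : ι → ι → L) (x : ι → L) : Prop :=
  (∀ i j, x i * x j ≤ Z i j) ∧ ∃ s : Finset ι, s.card ≤ 3 ∧ ∀ i, i ∉ s → x i = 0

/-- The entry `(i, j)` is attained by some vector of the list. -/
def Cov (Z : ι → ι → L) (T : List (ι → L)) (i j : ι) : Prop :=
  ∃ x ∈ T, x i * x j = Z i j

theorem good_vec (Z : ι → ι → L) (h0 : ∀ x : L, 0 ≤ x) (h1 : ∀ x : L, x ≤ 1)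
    (hZ : ∀ i, Z i i = 1) (hs : ∀ i j, Z i j = Z j i) (u v k : ι) (a b c : L)
    (hab : a * b ≤ Z u v) (hac : a * c ≤ Z u k) (hbc : b * c ≤ Z v k) :
    Good Z (vec u v k a b c) := by
  have hba : b * a ≤ Z v u := by rw [mul_comm, hs]; exact hab
  have hca : c * a ≤ Z k u := by rw [mul_comm, hs]; exact hac
  have hcb : c * b ≤ Z k v := by rw [mul_comm, hs]; exact hbc
  refine ⟨?_, {u, v, k}, Finset.card_le_three, ?_⟩
  · intro i j
    unfold vec
    split_ifs <;> subst_vars <;>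
      first | assumption | simp only [mul_zero, zero_mul, h0, hZ, h1]
  · intro i hi
    simp only [Finset.mem_insert, Finset.mem_singleton, not_or] at hi
    simp [vec, hi]

theorem Cov.symm {Z : ι → ι → L} (hs : ∀ i j, Z i j = Z j i) {T : List (ι → L)} {i j : ι}
    (h : Cov Z T i j) : Cov Z T j i := by
  obtain ⟨x, hx, h⟩ := h
  exact ⟨x, hx, by rw [mul_comm, h, hs]⟩

theorem step_aux (Z : ι → ι → L) (h0 : ∀ x : L, 0 ≤ x) (h1 : ∀ x : L, x ≤ 1)
    (hmul : ∀ x y : L, x * y ≤ x)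
    (hZ : ∀ i, Z i i = 1) (hs : ∀ i j, Z i j = Z j i) (S : Finset ι) (u v : ι)
    (hu : u ∈ S) (hv : v ∈ S) (huv : u ≠ v)
    (hmax : ∀ i ∈ S, ∀ j ∈ S, i ≠ j → Z i j ≤ Z u v)
    (T' : List (ι → L)) (hT' : ∀ x ∈ T', Good Z x) (k0 k1 : ι)
    (hk1 : k1 ∈ S) (hk1u : k1 ≠ u) (hk1v : k1 ≠ v)
    (hcov : ∀ i ∈ S, ∀ j ∈ S, i ≠ u → i ≠ v → j ≠ u → j ≠ v →
      (i = k0 ∧ j = k0) ∨ Cov Z T' i j)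
    (hle : Z u k1 ≤ Z v k1) :
    ∃ T : List (ι → L), T.length ≤ T'.length + (S.card - 1) ∧ (∀ x ∈ T, Good Z x) ∧
      ∀ i ∈ S, ∀ j ∈ S, (i = k0 ∧ j = k0 ∧ k1 = k0) ∨ Cov Z T i j := by
  set R := ((S.erase u).erase v).erase k1 with hR
  have hRc : R.card + 3 = S.card := by
    have a1 := Finset.card_erase_add_one hu
    have a2 := Finset.card_erase_add_one (s := S.erase u) (a := v) (by simp [hv, huv.symm])
    have a3 := Finset.card_erase_add_one (s := (S.erase u).erase v) (a := k1)
      (by simp [hk1, hk1u, hk1v])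
    rw [hR]; omega
  let x1 := vec u k1 v 1 (Z u k1) (Z u v)
  let x2 := vec v k1 u 1 (Z v k1) (0 : L)
  let f : ι → ι → L := fun k => vec k u v 1 (Z k u) (Z k v)
  refine ⟨x1 :: x2 :: (R.toList.map f ++ T'), ?_, ?_, ?_⟩
  · simp only [List.length_cons, List.length_append, List.length_map, Finset.length_toList]
    omega
  · intro x hx
    simp only [List.mem_cons, List.mem_append, List.mem_map, Finset.mem_toList] at hx
    rcases hx with rfl | rfl | ⟨k, hk, rfl⟩ | hx
    · apply good_vec Z h0 h1 hZ hs
      · rw [one_mul]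
      · rw [one_mul]
      · exact (hmul _ _).trans (hle.trans (hs _ _).le)
    · apply good_vec Z h0 h1 hZ hs
      · rw [one_mul]
      · rw [mul_zero]; exact h0 _
      · rw [mul_zero]; exact h0 _
    · simp only [hR, Finset.mem_erase] at hk
      apply good_vec Z h0 h1 hZ hs
      · rw [one_mul]
      · rw [one_mul]
      · exact (hmul _ _).trans (hmax _ hk.2.2.2 _ hu hk.2.2.1)
    · exact hT' x hx
  · set T := x1 :: x2 :: (R.toList.map f ++ T') with hT
    have m1 : x1 ∈ T := by simp [hT]
    have m2 : x2 ∈ T := by simp [hT]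
    have m3 : ∀ k ∈ S, k ≠ u → k ≠ v → k ≠ k1 → f k ∈ T := by
      intro k a b c d
      simp only [hT, List.mem_cons, List.mem_append, List.mem_map, Finset.mem_toList]
      right; right; left
      exact ⟨k, by simp [hR, a, b, c, d], rfl⟩
    have m4 : ∀ x ∈ T', x ∈ T := by intro x hx; simp [hT, hx]
    have cuu : Cov Z T u u := ⟨x1, m1, by simp [x1, vec, hZ]⟩
    have cuv : Cov Z T u v := ⟨x1, m1, by simp [x1, vec, huv.symm, hk1v.symm]⟩
    have cuk : Cov Z T u k1 := ⟨x1, m1, by simp [x1, vec, hk1u]⟩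
    have cvv : Cov Z T v v := ⟨x2, m2, by simp [x2, vec, hZ]⟩
    have cvk : Cov Z T v k1 := ⟨x2, m2, by simp [x2, vec, hk1v]⟩
    have ckk : ∀ k ∈ S, k ≠ u → k ≠ v → k ≠ k1 → Cov Z T k k := fun k a b c d =>
      ⟨f k, m3 k a b c d, by simp [f, vec, hZ]⟩
    have cku : ∀ k ∈ S, k ≠ u → k ≠ v → Cov Z T u k := fun k a b c => by
      by_cases d : k = k1
      · rw [d]; exact cuk
      · exact ⟨f k, m3 k a b c d, by simp [f, vec, b.symm, hs]⟩
    have ckv : ∀ k ∈ S, k ≠ u → k ≠ v → Cov Z T v k := fun k a b c => by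
      by_cases d : k = k1
      · rw [d]; exact cvk
      · exact ⟨f k, m3 k a b c d, by simp [f, vec, c.symm, huv.symm, hs]⟩
    intro i hi j hj
    by_cases iu : i = u
    · right; subst iu
      by_cases ju : j = i
      · rw [ju]; exact cuu
      by_cases jv : j = v
      · rw [jv]; exact cuv
      exact cku j hj ju jv
    by_cases iv : i = v
    · right; subst iv
      by_cases ju : j = u
      · rw [ju]; exact cuv.symm hs
      by_cases jv : j = i
      · rw [jv]; exact cvv
      exact ckv j hj ju jv
    by_cases ju : j = u
    · right; rw [ju]; exact (cku i hi iu iv).symm hs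
    by_cases jv : j = v
    · right; rw [jv]; exact (ckv i hi iu iv).symm hs
    rcases hcov i hi j hj iu iv ju jv with ⟨h, h'⟩ | ⟨x, hx, h⟩
    · by_cases e : k1 = k0
      · exact Or.inl ⟨h, h', e⟩
      · right; rw [h', ← h]; exact ckk i hi iu iv (fun q => e (by rw [← q, h]))
    · exact Or.inr ⟨x, m4 x hx, h⟩

theorem step (Z : ι → ι → L) (h0 : ∀ x : L, 0 ≤ x) (h1 : ∀ x : L, x ≤ 1)
    (hmul : ∀ x y : L, x * y ≤ x)
    (hZ : ∀ i, Z i i = 1) (hs : ∀ i j, Z i j = Z j i) (S : Finset ι) (u v : ι)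
    (hu : u ∈ S) (hv : v ∈ S) (huv : u ≠ v)
    (hmax : ∀ i ∈ S, ∀ j ∈ S, i ≠ j → Z i j ≤ Z u v)
    (T' : List (ι → L)) (hT' : ∀ x ∈ T', Good Z x) (k0 k1 : ι)
    (hk1 : k1 ∈ (S.erase u).erase v)
    (hcov : ∀ i ∈ (S.erase u).erase v, ∀ j ∈ (S.erase u).erase v,
      (i = k0 ∧ j = k0) ∨ Cov Z T' i j) :
    ∃ T : List (ι → L), T.length ≤ T'.length + (S.card - 1) ∧ (∀ x ∈ T, Good Z x) ∧
      ∀ i ∈ S, ∀ j ∈ S, (i = k0 ∧ j = k0 ∧ k1 = k0) ∨ Cov Z T i j := by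
  simp only [Finset.mem_erase] at hk1 hcov
  rcases le_total (Z u k1) (Z v k1) with h | h
  · exact step_aux Z h0 h1 hmul hZ hs S u v hu hv huv hmax T' hT' k0 k1 hk1.2.2 hk1.2.1 hk1.1
      (fun i hi j hj a b c d => hcov i ⟨b, a, hi⟩ j ⟨d, c, hj⟩) h
  · exact step_aux Z h0 h1 hmul hZ hs S v u hv hu huv.symm
      (fun i hi j hj a => (hmax i hi j hj a).trans (hs _ _).le) T' hT' k0 k1 hk1.2.2 hk1.1 hk1.2.1
      (fun i hi j hj a b c d => hcov i ⟨a, b, hi⟩ j ⟨c, d, hj⟩) h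

theorem exists_max (Z : ι → ι → L) (S : Finset ι) (h : 2 ≤ S.card) :
    ∃ u ∈ S, ∃ v ∈ S, u ≠ v ∧ ∀ i ∈ S, ∀ j ∈ S, i ≠ j → Z i j ≤ Z u v := by
  obtain ⟨a, ha, b, hb, hab⟩ := Finset.one_lt_card.1 h
  obtain ⟨p, hp, hm⟩ := Finset.exists_max_image S.offDiag (fun p => Z p.1 p.2)
    ⟨(a, b), by simp [ha, hb, hab]⟩
  rw [Finset.mem_offDiag] at hp
  exact ⟨p.1, hp.1, p.2, hp.2.1, hp.2.2, fun i hi j hj hij => hm (i, j) (by simp [hi, hj, hij])⟩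

theorem card_arith (n : ℕ) : (n + 2) ^ 2 / 4 = n ^ 2 / 4 + (n + 1) := by
  have : (n + 2) ^ 2 = n ^ 2 + 4 * (n + 1) := by ring
  omega

theorem cover (Z : ι → ι → L) (h0 : ∀ x : L, 0 ≤ x) (h1 : ∀ x : L, x ≤ 1)
    (hmul : ∀ x y : L, x * y ≤ x)
    (hZ : ∀ i, Z i i = 1) (hs : ∀ i j, Z i j = Z j i) (n : ℕ) :
    ∀ S : Finset ι, S.card = n + 1 → ∃ k0 ∈ S, ∃ T : List (ι → L),
      T.length ≤ (n + 1) ^ 2 / 4 ∧ (∀ x ∈ T, Good Z x) ∧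
      ∀ i ∈ S, ∀ j ∈ S, (i = k0 ∧ j = k0 ∧ n < 3) ∨ Cov Z T i j := by
  induction n using Nat.strong_induction_on with
  | _ n ih =>
  intro S hS
  match n, ih, hS with
  | 0, _, hS =>
    obtain ⟨a, rfl⟩ := Finset.card_eq_one.1 hS
    exact ⟨a, by simp, [], by simp, by simp, by simp⟩
  | 1, _, hS =>
    obtain ⟨u, v, huv, rfl⟩ := Finset.card_eq_two.1 hS
    refine ⟨v, by simp, [vec u v v 1 (Z u v) 0], by simp, ?_, ?_⟩
    · intro x hx
      rw [List.mem_singleton] at hx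
      subst hx
      apply good_vec Z h0 h1 hZ hs
      · rw [one_mul]
      · rw [mul_zero]; exact h0 _
      · rw [mul_zero]; exact h0 _
    · intro i hi j hj
      simp only [Finset.mem_insert, Finset.mem_singleton] at hi hj
      have hvu := huv.symm
      rcases hi with rfl | rfl <;> rcases hj with rfl | rfl <;>
        simp [Cov, vec, hZ, huv, hvu, hs]
  | m + 2, ih, hS =>
    obtain ⟨u, hu, v, hv, huv, hmax⟩ := exists_max Z S (by omega)
    have hc : ((S.erase u).erase v).card = m + 1 := by
      have a1 := Finset.card_erase_add_one hu
      have a2 := Finset.card_erase_add_one (s := S.erase u) (a := v) (by simp [hv, huv.symm])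
      omega
    obtain ⟨k0, hk0, T', hl, hg, hcov⟩ := ih m (by omega) _ hc
    have hk1 : ∃ k1 ∈ (S.erase u).erase v, k1 = k0 → m = 0 := by
      by_cases hm : m = 0
      · exact ⟨k0, hk0, fun _ => hm⟩
      · obtain ⟨k1, a, b⟩ := Finset.exists_mem_ne (s := (S.erase u).erase v) (by omega) k0
        exact ⟨k1, a, fun h => absurd h b⟩
    obtain ⟨k1, hk1, hk⟩ := hk1
    obtain ⟨T, h2, h3, h4⟩ := step Z h0 h1 hmul hZ hs S u v hu hv huv hmax T' hg k0 k1 hk1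
      (fun i hi j hj => (hcov i hi j hj).imp_left fun h => ⟨h.1, h.2.1⟩)
    refine ⟨k0, Finset.mem_of_mem_erase (Finset.mem_of_mem_erase hk0), T, ?_, h3, ?_⟩
    · have := card_arith (m + 1)
      have e : m + 2 + 1 = m + 1 + 2 := by omega
      rw [e, this]
      omega
    · intro i hi j hj
      refine (h4 i hi j hj).imp_left fun h => ⟨h.1, h.2.1, ?_⟩
      have := hk h.2.2
      omega

end Incl

/-- Over a totally ordered normal incline, every n×n completely
positive matrix with n ≥ 4 has a ⌊n²/4⌋-term support-3 rank-1
CP-representation: `A = B * Bᵀ` with at most ⌊n²/4⌋ columns, each column of `B`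
having at most 3 nonzero entries. -/
theorem stmt_11 {L : Type*} [CommSemiring L]
    (hidem : ∀ a : L, a + a = a)
    (habs : ∀ a b : L, a + a * b = a)
    (hLI : ∀ x y : L, x + y = y → ∃ z : L, x = y * z)
    (hsq : ∀ x : L, ∃! c : L, c * c = x)
    (hAG : ∀ x y : L, x * y + (x * x + y * y) = x * x + y * y)
    (htot : ∀ x y : L, x + y = y ∨ y + x = x)
    (n : ℕ) (hn : 4 ≤ n) (A : Matrix (Fin n) (Fin n) L)
    (hcp : ∃ m : ℕ, ∃ B : Matrix (Fin n) (Fin m) L, A = B * Bᵀ) :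
    ∃ k : ℕ, k ≤ n ^ 2 / 4 ∧
      ∃ B : Matrix (Fin n) (Fin k) L, A = B * Bᵀ ∧
        ∀ j : Fin k, {i : Fin n | B i j ≠ 0}.ncard ≤ 3 := by
  classical
  let _ : LinearOrder L :=
    { le := fun x y => x + y = y
      le_refl := hidem
      le_trans := fun a b c (h : a + b = b) (h' : b + c = c) =>
        show a + c = c by rw [← h', ← add_assoc, h]
      le_antisymm := fun a b (h : a + b = b) (h' : b + a = a) => by rw [← h', add_comm, h]
      le_total := htot
      toDecidableLE := Classical.decRel _ }
  have le_def : ∀ x y : L, x ≤ y ↔ x + y = y := fun _ _ => Iff.rfl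
  have h0 : ∀ x : L, 0 ≤ x := fun x => (le_def _ _).2 (zero_add x)
  have h1 : ∀ x : L, x ≤ 1 := fun x => (le_def _ _).2 (by
    rw [add_comm]; simpa using habs 1 x)
  have hmul : ∀ x y : L, x * y ≤ x := fun x y => (le_def _ _).2 (by rw [add_comm, habs])
  have hmono : ∀ x y z : L, x ≤ y → z * x ≤ z * y := fun x y z h => (le_def _ _).2 (by
    rw [← mul_add, (le_def _ _).1 h])
  have hmono2 : ∀ x y z w : L, x ≤ y → z ≤ w → x * z ≤ y * w := fun x y z w h h' =>
    (hmono z w x h').trans (by rw [mul_comm x, mul_comm y]; exact hmono x y w h)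
  have hadd : ∀ x y z : L, x ≤ z → y ≤ z → x + y ≤ z := fun x y z h h' => (le_def _ _).2 (by
    rw [add_assoc, (le_def _ _).1 h', (le_def _ _).1 h])
  have hsum_le : ∀ (m : ℕ) (f : Fin m → L) (a : L), (∀ k, f k ≤ a) → ∑ k, f k ≤ a := by
    intro m f a h
    exact Finset.sum_induction f (· ≤ a) (fun x y => hadd x y a) (h0 a) (fun k _ => h k)
  have hle_sum : ∀ (m : ℕ) (f : Fin m → L) (k : Fin m), f k ≤ ∑ k, f k := by
    intro m f k
    rw [← Finset.add_sum_erase _ f (Finset.mem_univ k), le_def, ← add_assoc, hidem]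
  have hsqle : ∀ b c : L, b * b ≤ c * c → b ≤ c := by
    intro b c h
    rcases le_total b c with h' | h'
    · exact h'
    · have e : b * b = c * c := le_antisymm h (hmono2 _ _ _ _ h' h')
      exact ((hsq (c * c)).unique e rfl).le
  choose c hc using fun i => (hsq (A i i)).exists
  obtain ⟨m, B, hB⟩ := hcp
  have hA : ∀ i j, A i j = ∑ k, B i k * B j k := by
    intro i j; rw [hB]; simp [Matrix.mul_apply]
  have hAs : ∀ i j, A i j = A j i := by
    intro i j; rw [hA, hA]; exact Finset.sum_congr rfl fun k _ => mul_comm _ _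
  have hBc : ∀ i k, B i k ≤ c i := by
    intro i k
    apply hsqle
    rw [hc, hA]
    exact hle_sum m (fun k => B i k * B i k) k
  have hAc : ∀ i j, A i j ≤ c i * c j := by
    intro i j
    rw [hA]
    exact hsum_le m _ _ fun k => hmono2 _ _ _ _ (hBc i k) (hBc j k)
  choose z hz using fun i j => hLI _ _ ((le_def _ _).1 (hAc i j))
  let Z : Fin n → Fin n → L := fun i j => if i = j then 1 else z (min i j) (max i j)
  have hZd : ∀ i, Z i i = 1 := fun i => by simp [Z]
  have hZs : ∀ i j, Z i j = Z j i := fun i j => by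
    simp only [Z, min_comm i j, max_comm i j, eq_comm (a := i) (b := j)]
  have hZA : ∀ i j, c i * c j * Z i j = A i j := by
    intro i j
    by_cases e : i = j
    · subst e; rw [hZd, mul_one, hc]
    · simp only [Z, if_neg e]
      rcases le_total i j with h | h
      · rw [min_eq_left h, max_eq_right h, ← hz]
      · rw [min_eq_right h, max_eq_left h, mul_comm (c i), ← hz, hAs]
  obtain ⟨k0, -, T, hTl, hTg, hTc⟩ := Incl.cover Z h0 h1 hmul hZd hZs (n - 1) Finset.univ
    (by rw [Finset.card_univ, Fintype.card_fin]; omega)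
  have en : n - 1 + 1 = n := by omega
  rw [en] at hTl
  refine ⟨T.length, hTl, Matrix.of fun i j => c i * T.get j i, ?_, ?_⟩
  · ext i j
    simp only [Matrix.mul_apply, Matrix.transpose_apply, Matrix.of_apply]
    have key : ∀ k : Fin T.length, c i * T.get k i * (c j * T.get k j)
        = c i * c j * (T.get k i * T.get k j) := fun k => by ring
    apply le_antisymm
    · rcases hTc i (Finset.mem_univ _) j (Finset.mem_univ _) with h | ⟨x, hx, h⟩
      · omega
      · obtain ⟨k, rfl⟩ := List.get_of_mem hx
        rw [← hZA, ← h, ← key]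
        exact hle_sum _ (fun k => c i * T.get k i * (c j * T.get k j)) k
    · apply hsum_le
      intro k
      rw [key, ← hZA]
      exact hmono _ _ _ ((hTg _ (List.get_mem T k)).1 i j)
  · intro j
    obtain ⟨s, hs, h⟩ := (hTg _ (List.get_mem T j)).2
    have : {i : Fin n | c i * T.get j i ≠ 0} ⊆ (s : Set (Fin n)) := by
      intro i hi
      by_contra hn
      exact hi (by rw [h i hn, mul_zero])
    refine (Set.ncard_le_ncard this s.finite_toSet).trans ?_
    rw [Set.ncard_coe_finset]; exact hs
end

section
/- Let L be a normal incline, let n ≥ 3, and let A be an n×n completely positive matrix over L such that every left almost principal 2×2 submatrix of A has its positive determinant greater than or equal to its negative determinant, i.e., for all indices i, j, k with i < k, j < k and i ≠ j one has A i k * A k j ≤ A i j * A k k. Then A is UL-completely positive: there exists an n×n upper triangular matrix U over L (U i j = 0 whenever i > j) with A = U * Uᵀ. -/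
open Matrix

/-- The incline order. -/
def ILe {L : Type*} [CommSemiring L] (a b : L) : Prop := a + b = b

section incline
variable {L : Type*} [CommSemiring L]

lemma ILe.trans {a b c : L} (h : ILe a b) (h' : ILe b c) : ILe a c := by
  unfold ILe at *
  rw [← h', ← add_assoc, h]

lemma ILe.antisymm {a b : L} (h : ILe a b) (h' : ILe b a) : a = b := by
  unfold ILe at *
  rw [← h, add_comm, h']

lemma ILe.mul {a b : L} (h : ILe a b) (c : L) : ILe (c * a) (c * b) := by
  unfold ILe at *
  rw [← mul_add, h]

lemma ILe.add {a b c : L} (h : ILe a c) (h' : ILe b c) : ILe (a + b) c := by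
  unfold ILe at *
  rw [add_assoc, h', h]

lemma ILe.left (hidem : ∀ a : L, a + a = a) (a b : L) : ILe a (a + b) := by
  unfold ILe
  rw [← add_assoc, hidem]

lemma ILe.right (hidem : ∀ a : L, a + a = a) (a b : L) : ILe b (a + b) := by
  rw [add_comm]; exact ILe.left hidem b a

lemma ILe.mul_le (habs : ∀ a b : L, a + a * b = a) (a b : L) : ILe (a * b) a := by
  unfold ILe
  rw [add_comm, habs]

lemma ILe.sum {ι : Type*} (s : Finset ι) (f : ι → L) (c : L) (h : ∀ i ∈ s, ILe (f i) c) :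
    ILe (∑ i ∈ s, f i) c := by
  classical
  induction s using Finset.induction_on with
  | empty => simp [ILe]
  | insert a s ha ih =>
    rw [Finset.sum_insert ha]
    exact ILe.add (h a (by simp)) (ih fun i hi => h i (by simp [hi]))

lemma ILe.single (hidem : ∀ a : L, a + a = a) {ι : Type*} (s : Finset ι) (f : ι → L)
    (i : ι) (hi : i ∈ s) : ILe (f i) (∑ i ∈ s, f i) := by
  classical
  rw [← Finset.add_sum_erase s f hi]
  exact ILe.left hidem _ _

lemma ILe.of_sq (hsq : ∀ x : L, ∃! c : L, c * c = x)
    (hAG : ∀ x y : L, x * y + (x * x + y * y) = x * x + y * y)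
    {x y : L} (h : ILe (x * x) (y * y)) : ILe x y := by
  unfold ILe at *
  refine (hsq (y * y)).unique ?_ rfl
  have h2 : (x + y) * (x + y) = x * y + (x * y + (x * x + y * y)) := by ring
  rw [h2, hAG, hAG, h]

/-- Partial cancellation. -/
lemma ILe.cancel (hsq : ∀ x : L, ∃! c : L, c * c = x)
    (hAG : ∀ x y : L, x * y + (x * x + y * y) = x * x + y * y)
    {s x y : L} (h : ILe (s * s * x) (s * s * y)) : ILe (s * x) (s * y) := by
  apply ILe.of_sq hsq hAG
  have h1 := h.mul x
  have h2 := h.mul y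
  have e1 : s * x * (s * x) = x * (s * s * x) := by ring
  have e2 : s * y * (s * y) = y * (s * s * y) := by ring
  have e3 : x * (s * s * y) = y * (s * s * x) := by ring
  rw [e1, e2]
  exact (e3 ▸ h1).trans h2

lemma ILe.cancel' (hidem : ∀ a : L, a + a = a)
    (habs : ∀ a b : L, a + a * b = a)
    (hLI : ∀ x y : L, x + y = y → ∃ z : L, x = y * z)
    (hsq : ∀ x : L, ∃! c : L, c * c = x)
    (hAG : ∀ x y : L, x * y + (x * x + y * y) = x * x + y * y)
    {s y t : L} (h : ILe (s * (s * y)) (s * t)) : ILe (s * y) t := by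
  obtain ⟨z, hz⟩ := hLI t (s * y + t) (ILe.right hidem _ _)
  obtain ⟨w, hw⟩ := hLI (s * y) (s * y + t) (ILe.left hidem _ _)
  have h1 : s * (s * y + t) = s * t := by rw [mul_add]; exact h
  have h2 : s * s * y = s * s * (y * z) := by
    calc s * s * y = s * (s * y) := by ring
      _ = s * ((s * y + t) * w) := by rw [← hw]
      _ = s * (s * y + t) * w := by ring
      _ = s * t * w := by rw [h1]
      _ = s * ((s * y + t) * z) * w := by rw [← hz]
      _ = s * ((s * y + t) * w) * z := by ring
      _ = s * (s * y) * z := by rw [← hw]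
      _ = _ := by ring
  have h3 : ILe (s * y) (s * (y * z)) := by
    apply ILe.cancel hsq hAG
    rw [← h2]; exact hidem _
  refine h3.trans ?_
  have h4 := (ILe.left hidem (s * y) t).mul z
  rw [mul_comm z (s * y + t), ← hz] at h4
  have e : s * (y * z) = z * (s * y) := by ring
  rw [e]; exact h4

lemma incline_key (hidem : ∀ a : L, a + a = a)
    (habs : ∀ a b : L, a + a * b = a)
    (hLI : ∀ x y : L, x + y = y → ∃ z : L, x = y * z)
    (hsq : ∀ x : L, ∃! c : L, c * c = x)
    (hAG : ∀ x y : L, x * y + (x * x + y * y) = x * x + y * y)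
    {s c t : L} (h : ILe (s * c) (s * t)) : ∃ z, s * z = s ∧ ILe (c * z) t := by
  obtain ⟨z, hz⟩ := hLI (s + t) (s + t + c) (ILe.left hidem _ _)
  have hs : ILe s (s + t + c) := (ILe.left hidem s t).trans (ILe.left hidem _ _)
  have hc : ILe c (s + t + c) := ILe.right hidem _ _
  obtain ⟨s', hs'⟩ := hLI _ _ hs
  have h1 : s * (s + t + c) = s * (s + t) := by
    apply ILe.antisymm
    · rw [mul_add]
      refine ILe.add (hidem _) (h.trans ?_)
      exact (ILe.right hidem s t).mul s
    · exact (ILe.left hidem _ _).mul s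
  have h2 : s * s * 1 = s * s * z := by
    calc s * s * 1 = s * ((s + t + c) * s') := by rw [← hs', mul_one]
      _ = s * (s + t + c) * s' := by ring
      _ = s * ((s + t + c) * z) * s' := by rw [h1, ← hz]
      _ = s * ((s + t + c) * s') * z := by ring
      _ = _ := by rw [← hs']
  have h3 : ILe (s * 1) (s * z) := by
    apply ILe.cancel hsq hAG
    rw [← h2]; exact hidem _
  rw [mul_one] at h3
  refine ⟨z, ILe.antisymm (ILe.mul_le habs _ _) h3, ?_⟩
  have h4 : ILe (c * z) (s + t) := by
    have := hc.mul z
    rw [mul_comm z (s + t + c), ← hz, mul_comm] at this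
    exact this
  obtain ⟨y, hy⟩ := hLI _ _ h4
  have h5 : c * z = s * y + t * y := by rw [hy, add_mul]
  have h6 : ILe (s * y) t := by
    apply ILe.cancel' hidem habs hLI hsq hAG
    refine ILe.trans ((ILe.left hidem (s * y) (t * y)).mul s) ?_
    rw [← h5]
    refine ILe.trans ?_ h
    rw [← mul_assoc]
    exact ILe.mul_le habs _ _
  rw [h5]
  exact ILe.add h6 (ILe.mul_le habs _ _)

lemma incline_key_fam (hidem : ∀ a : L, a + a = a)
    (habs : ∀ a b : L, a + a * b = a)
    (hLI : ∀ x y : L, x + y = y → ∃ z : L, x = y * z)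
    (hsq : ∀ x : L, ∃! c : L, c * c = x)
    (hAG : ∀ x y : L, x * y + (x * x + y * y) = x * x + y * y)
    {ι : Type*} [Fintype ι] (s : L) (c t : ι → L) :
    ∃ g, s * g = s ∧ ∀ i, ILe (s * c i) (s * t i) → ILe (c i * g) (t i) := by
  classical
  have h : ∀ i, ∃ z, s * z = s ∧ (ILe (s * c i) (s * t i) → ILe (c i * z) (t i)) := by
    intro i
    by_cases h : ILe (s * c i) (s * t i)
    · obtain ⟨z, h1, h2⟩ := incline_key hidem habs hLI hsq hAG h
      exact ⟨z, h1, fun _ => h2⟩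
    · exact ⟨1, mul_one _, fun h' => absurd h' h⟩
  choose z hz1 hz2 using h
  refine ⟨∏ i, z i, ?_, ?_⟩
  · have : ∀ S : Finset ι, s * ∏ i ∈ S, z i = s := by
      intro S
      induction S using Finset.induction_on with
      | empty => simp
      | insert a S ha ih => rw [Finset.prod_insert ha, ← mul_assoc, hz1, ih]
    exact this _
  · intro i hi
    refine ILe.trans ?_ (hz2 i hi)
    rw [← Finset.mul_prod_erase Finset.univ z (Finset.mem_univ i), ← mul_assoc]
    exact ILe.mul_le habs _ _

lemma incline_cs (hidem : ∀ a : L, a + a = a)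
    (hAG : ∀ x y : L, x * y + (x * x + y * y) = x * x + y * y)
    {m : ℕ} (f g : Fin m → L) :
    ILe ((∑ l, f l * g l) * (∑ l, f l * g l)) ((∑ l, f l * f l) * (∑ l, g l * g l)) := by
  have key : ∀ l k, ILe (f l * f l * (g k * g k))
      ((∑ l, f l * f l) * (∑ l, g l * g l)) := by
    intro l k
    rw [Finset.sum_mul_sum]
    refine ILe.trans ?_ (ILe.single hidem _ _ l (Finset.mem_univ l))
    exact ILe.single hidem Finset.univ (fun k => f l * f l * (g k * g k)) k (Finset.mem_univ k)
  rw [Finset.sum_mul_sum (f := fun l => f l * g l)]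
  refine ILe.sum _ _ _ fun l _ => ILe.sum _ _ _ fun k _ => ?_
  have h := hAG (f l * g k) (f k * g l)
  have e : f l * g l * (f k * g k) = f l * g k * (f k * g l) := by ring
  rw [e]
  refine ILe.trans h (ILe.add ?_ ?_)
  · rw [mul_mul_mul_comm]; exact key l k
  · rw [mul_mul_mul_comm]; exact key k l

end incline

/-- (Incline Markham theorem, UL version) If `A` is an n×n
completely positive matrix (n ≥ 3) over a normal incline all of whose left
almost principal 2×2 submatrices have `det⁺ ≥ det⁻`, then `A` is
UL-completely positive. -/
theorem stmt_12 {L : Type*} [CommSemiring L]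
    (hidem : ∀ a : L, a + a = a)
    (habs : ∀ a b : L, a + a * b = a)
    (hLI : ∀ x y : L, x + y = y → ∃ z : L, x = y * z)
    (hsq : ∀ x : L, ∃! c : L, c * c = x)
    (hAG : ∀ x y : L, x * y + (x * x + y * y) = x * x + y * y)
    (n : ℕ) (hn : 3 ≤ n) (A : Matrix (Fin n) (Fin n) L)
    (hcp : ∃ m : ℕ, ∃ B : Matrix (Fin n) (Fin m) L, A = B * Bᵀ)
    (hleft : ∀ i j k : Fin n, i < k → j < k → i ≠ j →
      A i k * A k j + A i j * A k k = A i j * A k k) :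
    ∃ U : Matrix (Fin n) (Fin n) L, (∀ i j : Fin n, j < i → U i j = 0) ∧
      A = U * Uᵀ := by
  obtain ⟨m, B, hB⟩ := hcp
  have hsymm : ∀ i j, A i j = A j i := by
    intro i j
    simp only [hB, Matrix.mul_apply, Matrix.transpose_apply]
    exact Finset.sum_congr rfl fun _ _ => mul_comm _ _
  have hcs : ∀ i j, ILe (A i j * A i j) (A i i * A j j) := by
    intro i j
    simp only [hB, Matrix.mul_apply, Matrix.transpose_apply]
    exact incline_cs hidem hAG _ _
  choose s hs using fun i => (hsq (A i i)).exists
  have hw : ∀ i k, ∃ w, A i k = s i * s k * w := by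
    intro i k
    apply hLI
    apply ILe.of_sq hsq hAG
    rw [mul_mul_mul_comm, hs, hs]
    exact hcs i k
  choose w hw using hw
  have hg : ∀ k, ∃ g, s k * g = s k ∧ ∀ p : Fin n × Fin n,
      ILe (s k * ((s p.1 * w p.1 k) * (s p.2 * w p.2 k))) (s k * A p.1 p.2) →
      ILe (((s p.1 * w p.1 k) * (s p.2 * w p.2 k)) * g) (A p.1 p.2) := fun k =>
    incline_key_fam hidem habs hLI hsq hAG (s k)
      (fun p : Fin n × Fin n => (s p.1 * w p.1 k) * (s p.2 * w p.2 k)) (fun p => A p.1 p.2)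
  choose g hg1 hg2 using hg
  let U : Matrix (Fin n) (Fin n) L := fun i k =>
    if i < k then s i * w i k * g k else if i = k then s k else 0
  have Ult : ∀ i k, i < k → U i k = s i * w i k * g k := fun i k h => by simp [U, h]
  have Ueq : ∀ k, U k k = s k := fun k => by simp [U]
  have Ugt : ∀ i k, k < i → U i k = 0 := fun i k h => by
    simp [U, not_lt.mpr h.le, h.ne']
  have hmain : ∀ i j, i < j → U i j * U j j = A i j := by
    intro i j h
    rw [Ult i j h, Ueq, hw i j]
    calc s i * w i j * g j * s j = s i * w i j * (s j * g j) := by ring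
      _ = s i * s j * w i j := by rw [hg1]; ring
  refine ⟨U, Ugt, ?_⟩
  have hzero : ∀ x : L, ILe 0 x := fun x => zero_add x
  -- the case `i ≤ j`
  have hle : ∀ i j, i ≤ j → A i j = ∑ k, U i k * U j k := by
    intro i j hij
    apply ILe.antisymm
    · refine ILe.trans ?_ (ILe.single hidem Finset.univ (fun k => U i k * U j k) j
        (Finset.mem_univ j))
      rcases hij.lt_or_eq with h | h
      · simp only [hmain i j h]; exact hidem _
      · subst h; simp only [Ueq, hs]; exact hidem _
    · refine ILe.sum _ _ _ fun k _ => ?_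
      rcases lt_trichotomy k j with hk | hk | hk
      · rw [Ugt j k hk, mul_zero]; exact hzero _
      · subst hk
        rcases hij.lt_or_eq with h | h
        · rw [hmain i k h]; exact hidem _
        · subst h; rw [Ueq, hs]; exact hidem _
      · have hik := lt_of_le_of_lt hij hk
        rw [Ult i k hik, Ult j k hk]
        rcases hij.lt_or_eq with h | h
        · have h1 : ILe (A i k * A k j) (A i j * A k k) := hleft i j k hik hk h.ne
          have h2 : ILe (s k * s k * ((s i * w i k) * (s j * w j k)))
              (s k * s k * A i j) := by
            rw [hs k, mul_comm (A k k) (A i j), ← hs k]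
            rw [hsymm k j, hw i k, hw j k, ← hs k] at h1
            convert h1 using 1
            ring
          have h3 := hg2 k (i, j) (ILe.cancel hsq hAG h2)
          refine ILe.trans ?_ h3
          have e : s i * w i k * g k * (s j * w j k * g k)
            = (s i * w i k) * (s j * w j k) * g k * g k := by ring
          rw [e]
          exact ILe.mul_le habs _ _
        · subst h
          have e : s i * w i k * g k * (s i * w i k * g k)
            = A i i * (w i k * g k * (w i k * g k)) := by rw [← hs i]; ring
          rw [e]
          exact ILe.mul_le habs _ _
  ext i j
  rw [Matrix.mul_apply]
  simp only [Matrix.transpose_apply]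
  rcases le_total i j with h | h
  · exact hle i j h
  · rw [hsymm, hle j i h]
    exact Finset.sum_congr rfl fun _ _ => mul_comm _ _
end

section
/- Let L be a normal incline and let A be an n×n completely positive matrix over L such that every right almost principal 2×2 submatrix of A has its positive determinant greater than or equal to its negative determinant, i.e., for all indices i, k, l with i < k, i < l and k ≠ l one has A i l * A k i ≤ A i i * A k l. Then A is LU-completely positive: there exists an n×n lower triangular matrix C over L (C i j = 0 whenever i < j) with A = C * Cᵀ. -/
open Matrix

section aux
variable {L : Type*} [IdemCommSemiring L]

theorem aux_sq_le (hinj : ∀ x y : L, x * x = y * y → x = y)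
    (hAG : ∀ x y : L, x * y ≤ x * x + y * y) (x y : L) (h : x * x ≤ y * y) : x ≤ y := by
  rw [← add_eq_right_iff_le]
  apply hinj
  have e : (x + y) * (x + y) = x * y + (x * x + y * y) := by
    have e1 : (x + y) * (x + y) = (x * y + x * y) + (x * x + y * y) := by ring
    rw [e1, add_idem]
  rw [e, add_eq_right_iff_le.2 (hAG x y), add_eq_right_iff_le.2 h]

theorem aux_red (hinj : ∀ x y : L, x * x = y * y → x = y)
    (hAG : ∀ x y : L, x * y ≤ x * x + y * y) (s x y : L) (h : s * s * x ≤ s * s * y) :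
    s * x ≤ s * y := by
  apply aux_sq_le hinj hAG
  calc s * x * (s * x) = s * s * x * x := by ring
    _ ≤ s * s * y * x := mul_le_mul_left h x
    _ = s * s * x * y := by ring
    _ ≤ s * s * y * y := mul_le_mul_left h y
    _ = s * y * (s * y) := by ring

theorem aux_cancel (hmul : ∀ a b : L, a * b ≤ a) (hLI : ∀ x y : L, x ≤ y → ∃ z, x = y * z)
    (a x y : L) (h : a * x ≤ a * y) : ∃ q, x * q ≤ y ∧ a * (x * q) = a * x := by
  obtain ⟨p, hp⟩ := hLI x (x + y) (by rw [add_eq_sup]; exact le_sup_left)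
  obtain ⟨q, hq⟩ := hLI y (x + y) (by rw [add_eq_sup]; exact le_sup_right)
  have e : a * (x + y) = a * y := by rw [mul_add]; exact add_eq_right_iff_le.2 h
  refine ⟨q, ?_, ?_⟩
  · calc x * q = (x + y) * p * q := by rw [← hp]
      _ = (x + y) * q * p := by ring
      _ = y * p := by rw [← hq]
      _ ≤ y := hmul _ _
  · calc a * (x * q) = a * ((x + y) * p * q) := by rw [← hp]
      _ = a * ((x + y) * q) * p := by ring
      _ = a * y * p := by rw [← hq]
      _ = a * (x + y) * p := by rw [e]
      _ = a * ((x + y) * p) := by ring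
      _ = a * x := by rw [← hp]

theorem aux_C (hinj : ∀ x y : L, x * x = y * y → x = y)
    (hAG : ∀ x y : L, x * y ≤ x * x + y * y)
    (hmul : ∀ a b : L, a * b ≤ a) (hLI : ∀ x y : L, x ≤ y → ∃ z, x = y * z)
    (s w y : L) (h : s * s * (s * w) ≤ s * s * y) : s * w ≤ y := by
  obtain ⟨q, hq, hq'⟩ := aux_cancel hmul hLI _ _ _ h
  have h1 := aux_red hinj hAG _ _ _ hq'.ge
  have h2 : s * w ≤ s * (w * q) := by
    apply aux_red hinj hAG
    calc s * s * w = s * (s * w) := by ring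
      _ ≤ _ := h1
      _ = _ := by ring
  calc s * w ≤ _ := h2
    _ = s * w * q := by ring
    _ ≤ y := hq

theorem aux_key (hinj : ∀ x y : L, x * x = y * y → x = y)
    (hAG : ∀ x y : L, x * y ≤ x * x + y * y)
    (hmul : ∀ a b : L, a * b ≤ a) (hLI : ∀ x y : L, x ≤ y → ∃ z, x = y * z)
    (s x z y : L) (h : s * s * (x * z) ≤ s * s * y) :
    ∃ g, x * z * g ≤ y ∧ s * x * g = s * x := by
  obtain ⟨q, hq, hq'⟩ := aux_cancel hmul hLI _ _ _ h
  obtain ⟨α, hα⟩ := hLI s (s + z) (by rw [add_eq_sup]; exact le_sup_left)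
  obtain ⟨β, hβ⟩ := hLI z (s + z) (by rw [add_eq_sup]; exact le_sup_right)
  have hzα : z * α = s * β := by
    calc z * α = (s + z) * β * α := by rw [← hβ]
      _ = (s + z) * α * β := by ring
      _ = s * β := by rw [← hα]
  have h1 : x * z * α ≤ y := by
    have e : x * z * α = s * (x * β) := by
      calc x * z * α = x * (z * α) := by ring
        _ = _ := by rw [hzα]; ring
    rw [e]
    apply aux_C hinj hAG hmul hLI
    rw [← e]
    calc s * s * (x * z * α) = s * s * (x * z) * α := by ring
      _ ≤ s * s * (x * z) := hmul _ _
      _ ≤ _ := h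
  have h2 : s * x * β ≤ s * x * β * q := by
    have e : s * s * (s * (x * β)) ≤ s * s * (s * (x * β * q)) := by
      apply le_of_eq
      calc s * s * (s * (x * β)) = s * s * x * (s * β) := by ring
        _ = s * s * (x * z) * α := by rw [← hzα]; ring
        _ = s * s * (x * z * q) * α := by rw [hq']
        _ = s * s * x * (z * α) * q := by ring
        _ = _ := by rw [hzα]; ring
    have e1 := aux_red hinj hAG _ _ _ e
    have e2 := aux_red hinj hAG s (x * β) (x * β * q) (by simpa only [mul_assoc] using e1)
    simpa only [mul_assoc] using e2
  have h3 : s * (α + β) = s := by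
    have e : (s + z) * (α + β) = s + z := by rw [mul_add, ← hα, ← hβ]
    calc s * (α + β) = (s + z) * α * (α + β) := by rw [← hα]
      _ = (s + z) * (α + β) * α := by ring
      _ = s := by rw [e, ← hα]
  refine ⟨α + q, ?_, le_antisymm (hmul _ _) ?_⟩
  · rw [mul_add, add_eq_sup]; exact sup_le h1 hq
  · calc s * x = s * (α + β) * x := by rw [h3]
      _ = s * x * α + s * x * β := by ring
      _ ≤ s * x * α + s * x * q := by
        refine add_le_add le_rfl (h2.trans ?_)
        calc s * x * β * q = s * x * q * β := by ring
          _ ≤ _ := hmul _ _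
      _ = _ := by ring

theorem aux_sum_le {ι : Type*} (t : Finset ι) (f : ι → L) (b : L) (h : ∀ i ∈ t, f i ≤ b) :
    ∑ i ∈ t, f i ≤ b := by
  classical
  induction t using Finset.induction_on with
  | empty => simp
  | insert a t ha ih =>
    rw [Finset.sum_insert ha, add_eq_sup]
    exact sup_le (h a (by simp)) (ih fun i hi => h i (by simp [hi]))

theorem aux_le_sum {ι : Type*} (t : Finset ι) (f : ι → L) (i : ι) (h : i ∈ t) :
    f i ≤ ∑ i ∈ t, f i := by
  classical
  rw [← Finset.add_sum_erase t f h, add_eq_sup]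
  exact le_sup_left

theorem aux_cs (hAG : ∀ x y : L, x * y ≤ x * x + y * y) {m : ℕ} (u v : Fin m → L) :
    (∑ j, u j * v j) * (∑ j, u j * v j) ≤ (∑ j, u j * u j) * (∑ j, v j * v j) := by
  rw [Finset.sum_mul_sum]
  apply aux_sum_le; intro i _
  apply aux_sum_le; intro j _
  have key : ∀ i j, (u i * v j) * (u i * v j) ≤ (∑ j, u j * u j) * (∑ j, v j * v j) := by
    intro i j
    calc (u i * v j) * (u i * v j) = (u i * u i) * (v j * v j) := by ring
      _ ≤ _ := mul_le_mul' (aux_le_sum _ (fun j => u j * u j) i (Finset.mem_univ _))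
        (aux_le_sum _ (fun j => v j * v j) j (Finset.mem_univ _))
  calc u i * v i * (u j * v j) = (u i * v j) * (u j * v i) := by ring
    _ ≤ _ := hAG _ _
    _ ≤ _ := by rw [add_eq_sup]; exact sup_le (key i j) (key j i)

theorem aux_main (hmul : ∀ a b : L, a * b ≤ a)
    (hLI : ∀ x y : L, x ≤ y → ∃ z : L, x = y * z)
    (hsq : ∀ x : L, ∃! c : L, c * c = x)
    (hAG : ∀ x y : L, x * y ≤ x * x + y * y)
    (n : ℕ) (A : Matrix (Fin n) (Fin n) L)
    (hcp : ∃ m : ℕ, ∃ B : Matrix (Fin n) (Fin m) L, A = B * Bᵀ)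
    (hright : ∀ i k l : Fin n, i < k → i < l → k ≠ l → A i l * A k i ≤ A i i * A k l) :
    ∃ C : Matrix (Fin n) (Fin n) L, (∀ i j : Fin n, i < j → C i j = 0) ∧
      A = C * Cᵀ := by
  classical
  have hinj : ∀ x y : L, x * x = y * y → x = y := fun x y h => (hsq (y * y)).unique h rfl
  have hsymm : ∀ i j, A i j = A j i := by
    obtain ⟨m, B, rfl⟩ := hcp
    intro i j
    simp only [Matrix.mul_apply, Matrix.transpose_apply]
    exact Finset.sum_congr rfl fun _ _ => mul_comm _ _
  have hcs : ∀ i k, A k i * A k i ≤ A i i * A k k := by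
    obtain ⟨m, B, rfl⟩ := hcp
    intro i k
    simp only [Matrix.mul_apply, Matrix.transpose_apply]
    rw [mul_comm (∑ j, B i j * B i j)]
    exact aux_cs hAG (B k) (B i)
  have hall : ∀ i k l : Fin n, i < k → i < l → A k i * A l i ≤ A i i * A k l := by
    intro i k l hk hl
    by_cases h : k = l
    · subst h; exact hcs i k
    · have := hright i k l hk hl h
      rwa [hsymm i l, mul_comm] at this
  choose s hs _ using hsq
  have hz : ∀ i k, ∃ z, A k i = s (A i i) * z := by
    intro i k
    apply hLI
    apply aux_sq_le hinj hAG
    rw [hs]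
    exact (hcs i k).trans (hmul _ _)
  choose z hz using hz
  have hg : ∀ i k l, ∃ g, i < k → i < l →
      z i k * z i l * g ≤ A k l ∧ s (A i i) * z i k * g = s (A i i) * z i k := by
    intro i k l
    by_cases h : i < k ∧ i < l
    · obtain ⟨g, hg⟩ := aux_key hinj hAG hmul hLI (s (A i i)) (z i k) (z i l) (A k l) (by
        have := hall i k l h.1 h.2
        rw [hs]
        refine le_trans (le_of_eq ?_) this
        rw [hz i k, hz i l]
        nth_rewrite 1 [← hs (A i i)]
        ring)
      exact ⟨g, fun _ _ => hg⟩
    · exact ⟨0, fun h1 h2 => absurd ⟨h1, h2⟩ h⟩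
  choose g hg using hg
  have hle1 : ∀ a b c : L, a ≤ c → a * b ≤ c := fun a b c h => (hmul a b).trans h
  -- the corrected columns
  have hw : ∀ i k, ∃ w, i < k → s (A i i) * w = A k i ∧ w ≤ z i k ∧
      ∀ l, i < l → w * z i l ≤ A k l := by
    intro i k
    refine ⟨z i k * ∏ l ∈ Finset.univ.filter (fun l => i < l), g i k l, fun hik => ⟨?_, hmul _ _, ?_⟩⟩
    · have : ∀ t : Finset (Fin n), (∀ l ∈ t, i < l) →
          s (A i i) * z i k * ∏ l ∈ t, g i k l = s (A i i) * z i k := by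
        intro t
        induction t using Finset.induction_on with
        | empty => simp
        | insert a t ha ih =>
          intro h
          rw [Finset.prod_insert ha, ← mul_assoc, (hg i k a hik (h a (by simp))).2]
          exact ih fun l hl => h l (by simp [hl])
      rw [← mul_assoc, this _ (by simp), ← hz]
    · intro l hl
      rw [← Finset.mul_prod_erase _ _ (show l ∈ Finset.univ.filter (fun l => i < l) by simp [hl])]
      refine le_trans (le_of_eq ?_) (hle1 (z i k * z i l * g i k l)
        (∏ x ∈ (Finset.univ.filter (fun l => i < l)).erase l, g i k x) _ (hg i k l hik hl).1)
      ring
  choose w hw using hw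
  let C : Matrix (Fin n) (Fin n) L :=
    fun k i => if k < i then 0 else if k = i then s (A i i) else w i k
  have hC0 : ∀ k i, k < i → C k i = 0 := fun k i h => by simp [C, h]
  have hCd : ∀ i, C i i = s (A i i) := fun i => by simp [C]
  have hCw : ∀ k i, i < k → C k i = w i k := fun k i h => by simp [C, h.not_gt, h.ne']
  have hd : ∀ i k, i ≤ k → C i i * C k i = A k i := by
    intro i k h
    rcases h.eq_or_lt with rfl | h
    · rw [hCd, hs]
    · rw [hCd, hCw _ _ h, (hw i k h).1]
  refine ⟨C, hC0, ?_⟩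
  ext k l
  simp only [Matrix.mul_apply, Matrix.transpose_apply]
  apply le_antisymm
  · rcases le_total k l with h | h
    · rw [hsymm, ← hd k l h]
      exact aux_le_sum _ (fun j => C k j * C l j) k (Finset.mem_univ _)
    · rw [← hd l k h, mul_comm]
      exact aux_le_sum _ (fun j => C k j * C l j) l (Finset.mem_univ _)
  · apply aux_sum_le
    intro i _
    rcases lt_trichotomy k i with h | rfl | h
    · rw [hC0 _ _ h, zero_mul]; simp
    · rcases lt_or_ge l k with h' | h'
      · rw [hC0 _ _ h', mul_zero]; simp
      · rw [hd _ _ h', hsymm]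
    · rcases lt_trichotomy l i with h' | rfl | h'
      · rw [hC0 _ _ h', mul_zero]; simp
      · rw [mul_comm, hd _ _ h.le]
      · rw [hCw _ _ h, hCw _ _ h']
        exact (mul_le_mul' le_rfl (hw i l h').2.1).trans ((hw i k h).2.2 l h')

end aux



/-- (Incline Markham theorem, LU version) If `A` is an n×n
completely positive matrix over a normal incline all of whose right almost
principal 2×2 submatrices have `det⁺ ≥ det⁻`, then `A` is LU-completely
positive. -/
theorem stmt_13 {L : Type*} [CommSemiring L]
    (hidem : ∀ a : L, a + a = a)
    (habs : ∀ a b : L, a + a * b = a)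
    (hLI : ∀ x y : L, x + y = y → ∃ z : L, x = y * z)
    (hsq : ∀ x : L, ∃! c : L, c * c = x)
    (hAG : ∀ x y : L, x * y + (x * x + y * y) = x * x + y * y)
    (n : ℕ) (A : Matrix (Fin n) (Fin n) L)
    (hcp : ∃ m : ℕ, ∃ B : Matrix (Fin n) (Fin m) L, A = B * Bᵀ)
    (hright : ∀ i k l : Fin n, i < k → i < l → k ≠ l →
      A i l * A k i + A i i * A k l = A i i * A k l) :
    ∃ C : Matrix (Fin n) (Fin n) L, (∀ i j : Fin n, i < j → C i j = 0) ∧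
      A = C * Cᵀ := by
  letI inst : IdemCommSemiring L :=
    { (inferInstance : CommSemiring L) with
      sup := fun a b => a + b
      le := fun a b => a + b = b
      le_refl := hidem
      le_trans := fun a b c (h1 : a + b = b) (h2 : b + c = c) => by
        change a + c = c
        rw [← h2, ← add_assoc, h1]
      le_antisymm := fun a b (h1 : a + b = b) (h2 : b + a = a) => by
        rw [← h2, add_comm, h1]
      le_sup_left := fun a b => by
        change a + (a + b) = a + b
        rw [← add_assoc, hidem]
      le_sup_right := fun a b => by
        change b + (a + b) = a + b
        rw [add_left_comm, hidem]
      sup_le := fun a b c (h1 : a + c = c) (h2 : b + c = c) => by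
        change a + b + c = c
        rw [add_assoc, h2, h1]
      add_eq_sup := fun a b => rfl
      bot := 0
      bot_le := fun a => zero_add a }
  exact aux_main (L := L) (fun a b => (add_comm (a * b) a).trans (habs a b)) hLI hsq hAG n A hcp hright
end

section
/- Let L be a normal incline and let A be an n×n symmetric TN₂ matrix over L, i.e., Aᵀ = A and for all indices i < k and j < l one has A i l * A k j ≤ A i j * A k l (every 2×2 submatrix has its positive determinant greater than or equal to its negative determinant). Then A is both LU-completely positive and UL-completely positive: there exist an n×n lower triangular matrix C over L with A = C * Cᵀ and an n×n upper triangular matrix U over L with A = U * Uᵀ. -/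
open Matrix

section Incline

variable {L : Type*} [IdemCommSemiring L]

/-- Cancellation of squares. -/
lemma inc_cancel (hsq : ∀ x : L, ∃! c : L, c * c = x) (g x r : L)
    (h : g * g * x = g * g * x * r) : g * x = g * x * r := by
  obtain ⟨ρ, hρ, -⟩ := hsq r
  have h1 : g * x = g * x * ρ := by
    apply (hsq ((g * x) * (g * x))).unique rfl
    calc (g * x * ρ) * (g * x * ρ) = (g * g * x * (ρ * ρ)) * x := by ring
      _ = (g * g * x) * x := by rw [hρ, ← h]
      _ = _ := by ring
  calc g * x = g * x * ρ * ρ := by rw [← h1, ← h1]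
    _ = g * x * r := by rw [mul_assoc (g * x), hρ]

/-- Separation lemma. -/
lemma inc_sep (h1 : ∀ a : L, a ≤ 1)
    (hLI : ∀ x y : L, x ≤ y → ∃ z : L, x = y * z)
    (hsq : ∀ x : L, ∃! c : L, c * c = x) (u v r : L) (h : u * v = u * v * r) :
    ∃ q q' : L, u = u * q ∧ v = v * q' ∧ q * q' ≤ r := by
  have hml : ∀ a b : L, a * b ≤ a := fun a b => by
    calc a * b ≤ a * 1 := by gcongr; exact h1 b
      _ = a := mul_one a
  have hmr : ∀ a b : L, a * b ≤ b := fun a b => by rw [mul_comm]; exact hml b a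
  -- general step
  have key : ∀ u v : L, u * v = u * v * r → ∃ z : L, v * z = v * z * r ∧ u = u * (z + r) := by
    intro u v h
    obtain ⟨z, hz⟩ := hLI u (u + v) (by simp [add_eq_sup])
    have hvzu : v * z ≤ u := by
      calc v * z ≤ (u + v) * z := by gcongr; simp [add_eq_sup]
        _ = u := hz.symm
    obtain ⟨k, hk⟩ := hLI (v * z) u hvzu
    have hvz : v * z = v * z * r := by
      apply inc_cancel hsq
      calc v * v * z = (u * v) * k := by rw [mul_assoc, hk]; ring
        _ = (u * v * r) * k := by rw [← h]
        _ = v * (u * k) * r := by ring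
        _ = v * v * z * r := by rw [← hk]; ring
    refine ⟨z, hvz, le_antisymm ?_ (hml _ _)⟩
    calc u = u * z + v * z * r := by rw [← hvz, ← add_mul]; exact hz
      _ ≤ u * z + u * r := by gcongr
      _ = u * (z + r) := by ring
  obtain ⟨z, hz, hu⟩ := key u v h
  obtain ⟨z', hz', hv⟩ := key v z hz
  refine ⟨z + r, z' + r, hu, hv, ?_⟩
  have : (z + r) * (z' + r) = z * z' + z * r + r * (z' + r) := by ring
  rw [this, hz', add_eq_sup, add_eq_sup]
  exact sup_le (sup_le (hmr _ _) (hmr _ _)) (hml _ _)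

lemma inc_pair (h1 : ∀ a : L, a ≤ 1)
    (hLI : ∀ x y : L, x ≤ y → ∃ z : L, x = y * z)
    (hsq : ∀ x : L, ∃! c : L, c * c = x) (s y z a : L)
    (h : (s * y) * (s * z) ≤ s * s * a) :
    ∃ q q' : L, s * y = s * y * q ∧ s * z = s * z * q' ∧ (y * z) * (q * q') ≤ a := by
  obtain ⟨r, hr⟩ := hLI a (y * z + a) (by simp [add_eq_sup])
  obtain ⟨k, hk⟩ := hLI (y * z) (y * z + a) (by simp [add_eq_sup])
  have hX : s * s * (y * z + a) = s * s * a := by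
    rw [mul_add]
    apply add_eq_right_iff_le.2
    calc _ = (s * y) * (s * z) := by ring
      _ ≤ _ := h
  generalize hXX : y * z + a = X at *
  obtain ⟨q, q', hq, hq', hqq⟩ := inc_sep h1 hLI hsq (s * y) (s * z) r (by
    calc (s * y) * (s * z) = s * s * (y * z) := by ring
      _ = (s * s * X) * k := by rw [hk]; ring
      _ = s * s * (X * r) * k := by rw [hX, ← hr]
      _ = s * s * (X * k) * r := by ring
      _ = s * s * (y * z) * r := by rw [← hk]
      _ = _ := by ring)
  refine ⟨q, q', hq, hq', ?_⟩
  calc (y * z) * (q * q') ≤ X * r := by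
        gcongr
        rw [← hXX]; simp [add_eq_sup]
    _ = a := hr.symm

lemma inc_prod {ι : Type*} (t : Finset ι) (w : L) (f : ι → L) (h : ∀ i ∈ t, w = w * f i) :
    w = w * ∏ i ∈ t, f i := by
  classical
  induction t using Finset.induction_on with
  | empty => simp
  | insert a t ha ih =>
    rw [Finset.prod_insert ha, ← mul_assoc, ← h a (by simp)]
    exact ih fun i hi => h i (by simp [hi])

lemma inc_prod_le (h1 : ∀ a : L, a ≤ 1) {ι : Type*} [Fintype ι] (f : ι → L) (i : ι) :
    ∏ j, f j ≤ f i := by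
  classical
  rw [← Finset.mul_prod_erase _ f (Finset.mem_univ i)]
  calc _ ≤ f i * 1 := by gcongr; exact h1 _
    _ = f i := mul_one _

lemma inc_col (h1 : ∀ a : L, a ≤ 1)
    (hLI : ∀ x y : L, x ≤ y → ∃ z : L, x = y * z)
    (hsq : ∀ x : L, ∃! c : L, c * c = x) {ι : Type*} [Fintype ι]
    (s : L) (x : ι → L) (a : ι → ι → L) (hx : ∀ i, x i ≤ s)
    (h : ∀ i j, x i * x j ≤ s * s * a i j) :
    ∃ z : ι → L, (∀ i, s * z i = x i) ∧ ∀ i j, z i * z j ≤ a i j := by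
  choose y hy using fun i => hLI (x i) s (hx i)
  have := fun i j => inc_pair h1 hLI hsq s (y i) (y j) (a i j) (by rw [← hy, ← hy]; exact h i j)
  choose q q' hq hq' hqq using this
  refine ⟨fun i => y i * ((∏ j, q i j) * ∏ j, q' j i), fun i => ?_, fun i j => ?_⟩
  · rw [hy, ← mul_assoc, ← mul_assoc, ← inc_prod _ _ _ fun j _ => hq i j,
      ← inc_prod _ _ _ fun j _ => hq' j i]
  · refine le_trans ?_ (hqq i j)
    have e1 : (∏ j, q i j) * (∏ j, q' j i) ≤ q i j := by
      calc _ ≤ q i j * 1 := by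
            gcongr
            · exact inc_prod_le h1 _ j
            · exact h1 _
        _ = _ := mul_one _
    have e2 : (∏ k, q j k) * (∏ k, q' k j) ≤ q' i j := by
      calc _ ≤ 1 * q' i j := by
            gcongr
            · exact h1 _
            · exact inc_prod_le h1 (fun k => q' k j) i
        _ = _ := one_mul _
    calc _ = (y i * y j) * (((∏ j, q i j) * (∏ j, q' j i)) * ((∏ k, q j k) * (∏ k, q' k j))) := by
          ring
      _ ≤ _ := by gcongr

lemma inc_term_le_sum {ι : Type*} [Fintype ι] (f : ι → L) (i : ι) : f i ≤ ∑ j, f j := by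
  classical
  rw [← Finset.add_sum_erase _ f (Finset.mem_univ i)]
  simp [add_eq_sup]

lemma inc_sum_le {ι : Type*} (t : Finset ι) (f : ι → L) (b : L) (h : ∀ i, f i ≤ b) :
    ∑ j ∈ t, f j ≤ b := by
  classical
  induction t using Finset.induction_on with
  | empty => simp
  | insert a t ha ih =>
    rw [Finset.sum_insert ha, add_eq_sup]
    exact sup_le (h a) ih

lemma inc_main (h1 : ∀ a : L, a ≤ 1)
    (hLI : ∀ x y : L, x ≤ y → ∃ z : L, x = y * z)
    (hsq : ∀ x : L, ∃! c : L, c * c = x)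
    (hAG : ∀ x y : L, x * y ≤ x * x + y * y)
    {ι : Type*} [Fintype ι] [LinearOrder ι] (A : Matrix ι ι L) (hsymm : ∀ i j, A i j = A j i)
    (hTN2 : ∀ i k j l : ι, i < k → j < l → A i l * A k j ≤ A i j * A k l) :
    ∃ C : Matrix ι ι L, (∀ i j : ι, i < j → C i j = 0) ∧ A = C * Cᵀ := by
  have hsqle : ∀ x y : L, x * x ≤ y * y → x ≤ y := by
    intro x y h
    rw [← add_eq_right_iff_le]
    refine (hsq (y * y)).unique ?_ rfl
    calc (x + y) * (x + y) = (x * x + y * y) + (x * y + x * y) := by ring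
      _ = (x * x + y * y) + x * y := by rw [add_idem]
      _ = x * x + y * y := add_eq_left_iff_le.2 (hAG x y)
      _ = y * y := add_eq_right_iff_le.2 h
  choose s hs _ using fun k => hsq (A k k)
  simp only at hs
  have hcol := fun k => inc_col h1 hLI hsq (s k) (fun i => if k < i then A k i else 0) A
    (by
      intro i
      split_ifs with hi
      · apply hsqle
        rw [hs]
        calc A k i * A k i = A k i * A i k := by rw [hsymm i k]
          _ ≤ A k k * A i i := hTN2 k i k i hi hi
          _ ≤ A k k * 1 := by gcongr; exact h1 _
          _ = _ := mul_one _
      · simp)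
    (by
      intro i j
      rw [hs]
      split_ifs with hi hj
      · calc A k i * A k j = A k j * A i k := by rw [hsymm i k, mul_comm]
          _ ≤ A k k * A i j := hTN2 k i k j hi hj
      all_goals simp)
  choose z hz hzz using hcol
  let C : Matrix ι ι L := fun i k => if i < k then 0 else if i = k then s k else z k i
  have hC0 : ∀ i k, i < k → C i k = 0 := fun i k h => by simp [C, h]
  have hC1 : ∀ k, C k k = s k := fun k => by simp [C]
  have hC2 : ∀ i k, k < i → C i k = z k i := fun i k h => by
    simp [C, not_lt.2 h.le, h.ne']
  have hpiv : ∀ i k, k ≤ i → C k k * C i k = A k i := by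
    intro i k h
    rcases h.eq_or_lt with rfl | h
    · rw [hC1, hs]
    · rw [hC1, hC2 i k h, hz]; simp [h]
  refine ⟨C, hC0, ?_⟩
  ext i j
  rw [Matrix.mul_apply]
  simp only [Matrix.transpose_apply]
  apply le_antisymm
  · rcases le_total i j with h | h
    · rw [← hpiv j i h]
      exact inc_term_le_sum (fun k => C i k * C j k) i
    · rw [hsymm, ← hpiv i j h, mul_comm]
      exact inc_term_le_sum (fun k => C i k * C j k) j
  · apply inc_sum_le
    intro k
    rcases lt_trichotomy i k with h | rfl | h
    · simp [hC0 i k h]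
    · rcases lt_or_ge j i with h | h
      · simp [hC0 j i h]
      · rw [hpiv j i h]
    · rcases lt_trichotomy j k with h' | rfl | h'
      · simp [hC0 j k h']
      · rw [mul_comm, hpiv i j h.le, hsymm]
      · rw [hC2 i k h, hC2 j k h']
        exact hzz k i j

end Incline


/-- Every square symmetric TN₂ matrix over a normal incline is
both LU-completely positive and UL-completely positive. -/
theorem stmt_17 {L : Type*} [CommSemiring L]
    (hidem : ∀ a : L, a + a = a)
    (habs : ∀ a b : L, a + a * b = a)
    (hLI : ∀ x y : L, x + y = y → ∃ z : L, x = y * z)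
    (hsq : ∀ x : L, ∃! c : L, c * c = x)
    (hAG : ∀ x y : L, x * y + (x * x + y * y) = x * x + y * y)
    (n : ℕ) (A : Matrix (Fin n) (Fin n) L) (hsymm : Aᵀ = A)
    (hTN2 : ∀ i k j l : Fin n, i < k → j < l →
      A i l * A k j + A i j * A k l = A i j * A k l) :
    (∃ C : Matrix (Fin n) (Fin n) L, (∀ i j : Fin n, i < j → C i j = 0) ∧
        A = C * Cᵀ) ∧
    (∃ U : Matrix (Fin n) (Fin n) L, (∀ i j : Fin n, j < i → U i j = 0) ∧
        A = U * Uᵀ) := by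
  letI inst : IdemCommSemiring L :=
    { (inferInstance : CommSemiring L), IdemSemiring.ofSemiring hidem with }
  have hle : ∀ x y : L, x ≤ y ↔ x + y = y := fun x y => add_eq_right_iff_le.symm
  have h1 : ∀ a : L, a ≤ 1 := fun a => by
    rw [hle, add_comm]; simpa using habs 1 a
  have hLI' : ∀ x y : L, x ≤ y → ∃ z : L, x = y * z := fun x y h => hLI x y ((hle x y).1 h)
  have hAG' : ∀ x y : L, x * y ≤ x * x + y * y := fun x y => (hle _ _).2 (hAG x y)
  have hs : ∀ i j, A i j = A j i := fun i j => by
    conv_lhs => rw [← hsymm]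
    rfl
  refine ⟨inc_main h1 hLI' hsq hAG' A hs fun i k j l h h' => (hle _ _).2 (hTN2 i k j l h h'), ?_⟩
  obtain ⟨C, hC, hA⟩ := inc_main (ι := (Fin n)ᵒᵈ) h1 hLI' hsq hAG' A hs (by
    intro i k j l h h'
    have := (hle _ _).2 (hTN2 k i l j h h')
    rw [mul_comm (A i l), mul_comm (A i j)]
    exact this)
  exact ⟨C, fun i j h => hC i j h, hA⟩
end
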